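/- arXiv:2204.07785 — 2 statements merged into one kernel-verified Lean document; each statement's English description precedes it below -/
import Mathlib

section
/- There exists δ > 0 such that for all real u, v with |u|, |v| < δ, the series ∑_{k ≥ n+1, n ≥ 1} t^*(k−n+1, {1}^{n−1}) u^{k−n−1} v^{n−1} converges absolutely and equals (1/((1−u)(1−v))) · ₃F₂((1−u)/2, 1/2, 1; (3−u)/2, (3−v)/2; 1). -/
open scoped BigOperators

/-- The multiple `t`-value of an index `K = (k₁, …, kₙ)` (a list of positive integers):
`t(K) = ∑_{m₁ > ⋯ > mₙ > 0, all mᵢ odd} 1 / (m₁^{k₁} ⋯ mₙ^{kₙ})`. -/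
noncomputable def multT (K : List ℕ) : ℝ :=
  ∑' m : Fin K.length → ℕ,
    if (∀ i, Odd (m i)) ∧ (∀ i j : Fin K.length, i < j → m j < m i) then
      ∏ i, ((m i : ℝ) ^ K.get i)⁻¹
    else 0

/-- The multiple `t`-star value of an index `K = (k₁, …, kₙ)`:
`t*(K) = ∑_{m₁ ≥ ⋯ ≥ mₙ > 0, all mᵢ odd} 1 / (m₁^{k₁} ⋯ mₙ^{kₙ})`. -/
noncomputable def multTStar (K : List ℕ) : ℝ :=
  ∑' m : Fin K.length → ℕ,
    if (∀ i, Odd (m i)) ∧ (∀ i j : Fin K.length, i < j → m j ≤ m i) then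
      ∏ i, ((m i : ℝ) ^ K.get i)⁻¹
    else 0

/-- An index (list of positive integers) is admissible if its first entry is `> 1`. -/
def Admissible (K : List ℕ) : Prop := (∀ i ∈ K, 1 ≤ i) ∧ 2 ≤ K.headI

instance : DecidablePred Admissible := fun K =>
  inferInstanceAs (Decidable ((∀ i ∈ K, 1 ≤ i) ∧ 2 ≤ K.headI))

/-- `G0h k n s` is the sum of multiple `t`-values over all admissible indices of
weight `k`, depth `n` and height `s`. -/
noncomputable def G0h (k n s : ℕ) : ℝ :=
  ∑' K : List ℕ,
    if Admissible K ∧ K.sum = k ∧ K.length = n ∧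
        K.countP (fun i => decide (2 ≤ i)) = s then
      multT K
    else 0

/-- `G0hStar k n s` is the sum of multiple `t`-star values over all admissible indices of
weight `k`, depth `n` and height `s`. -/
noncomputable def G0hStar (k n s : ℕ) : ℝ :=
  ∑' K : List ℕ,
    if Admissible K ∧ K.sum = k ∧ K.length = n ∧
        K.countP (fun i => decide (2 ≤ i)) = s then
      multTStar K
    else 0

/-- `G0d k n` is the sum of multiple `t`-values over all admissible indices of
weight `k` and depth `n`. -/
noncomputable def G0d (k n : ℕ) : ℝ :=
  ∑' K : List ℕ,
    if Admissible K ∧ K.sum = k ∧ K.length = n then multT K else 0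

/-- `G0dStar k n` is the sum of multiple `t`-star values over all admissible indices of
weight `k` and depth `n`. -/
noncomputable def G0dStar (k n : ℕ) : ℝ :=
  ∑' K : List ℕ,
    if Admissible K ∧ K.sum = k ∧ K.length = n then multTStar K else 0

/-- The single `t`-value `t(n) = ∑_{m odd, m > 0} 1 / m^n`. -/
noncomputable def tval (n : ℕ) : ℝ := ∑' m : ℕ, 1 / (2 * (m : ℝ) + 1) ^ n

/-- The ascending Pochhammer symbol `(a)ₙ = a (a+1) ⋯ (a+n-1)`. -/
noncomputable def poch (a : ℂ) (n : ℕ) : ℂ := ∏ i ∈ Finset.range n, (a + i)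

/-- The generalized hypergeometric function `₃F₂(a, b, c; d, e; z)`. -/
noncomputable def hyp3F2 (a b c d e z : ℂ) : ℂ :=
  ∑' n : ℕ, poch a n * poch b n * poch c n /
      ((n.factorial : ℂ) * poch d n * poch e n) * z ^ n

/-- The generalized hypergeometric function with upper parameters `as` and lower
parameters `bs`. -/
noncomputable def hypF (as bs : List ℂ) (z : ℂ) : ℂ :=
  ∑' n : ℕ, (as.map fun a => poch a n).prod /
      ((n.factorial : ℂ) * (bs.map fun b => poch b n).prod) * z ^ n

/-- The one-variable multiple polylogarithm
`L_K(z) = ∑_{m₁ > ⋯ > mₙ > 0, all mᵢ odd} z^{m₁} / (m₁^{k₁} ⋯ mₙ^{kₙ})`. -/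
noncomputable def Lt (K : List ℕ) (z : ℝ) : ℝ :=
  ∑' m : Fin K.length → ℕ,
    if h : (∀ i, Odd (m i)) ∧ (∀ i j : Fin K.length, i < j → m j < m i) ∧
        0 < K.length then
      z ^ (m ⟨0, h.2.2⟩) * ∏ i, ((m i : ℝ) ^ K.get i)⁻¹
    else 0

/-- The one-variable star multiple polylogarithm
`L*_K(z) = ∑_{m₁ ≥ ⋯ ≥ mₙ > 0, all mᵢ odd} z^{m₁} / (m₁^{k₁} ⋯ mₙ^{kₙ})`. -/
noncomputable def LtStar (K : List ℕ) (z : ℝ) : ℝ :=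
  ∑' m : Fin K.length → ℕ,
    if h : (∀ i, Odd (m i)) ∧ (∀ i j : Fin K.length, i < j → m j ≤ m i) ∧
        0 < K.length then
      z ^ (m ⟨0, h.2.2⟩) * ∏ i, ((m i : ℝ) ^ K.get i)⁻¹
    else 0

/-- `G0hz k n s z` is the sum of `L_K(z)` over all admissible indices `K` of
weight `k`, depth `n` and height `s`. -/
noncomputable def G0hz (k n s : ℕ) (z : ℝ) : ℝ :=
  ∑' K : List ℕ,
    if Admissible K ∧ K.sum = k ∧ K.length = n ∧
        K.countP (fun i => decide (2 ≤ i)) = s then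
      Lt K z
    else 0

/-- `G0hzStar k n s z` is the sum of `L*_K(z)` over all admissible indices `K` of
weight `k`, depth `n` and height `s`. -/
noncomputable def G0hzStar (k n s : ℕ) (z : ℝ) : ℝ :=
  ∑' K : List ℕ,
    if Admissible K ∧ K.sum = k ∧ K.length = n ∧
        K.countP (fun i => decide (2 ≤ i)) = s then
      LtStar K z
    else 0

/-! Sorting `t*(a+2, {1}^b)` by its largest summation variable `2N+1` leaves the complete
homogeneous sum `h_b(1, 1/3, …, 1/(2N+1))`. Since `∑ h_b(x) v^b = ∏ (1 - x_j v)⁻¹` and the sum over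
`a` is geometric, the double generating function equals
`∑_N ((2N+1)(2N+1-u))⁻¹ ∏_{i ≤ N} (1 - v/(2i+1))⁻¹`, which is the `₃F₂` series term by term.
The rearrangement is justified by absolute convergence: for `0 ≤ u, v < 1` the products
`P_N = ∏_{i ≤ N} (1 - v/(2i+1))⁻¹` make `P_N / (2N+1)` decreasing, and its successive differences
dominate the terms of this series up to a constant. -/

open Finset
open scoped NNReal ENNReal

section StarSum

variable {κ R S : Type*} [CommSemiring R] [CommSemiring S]

/-- The truncated star sum `∑_{n > m₁ ≥ ⋯ ≥ m_r ≥ 0} w k₁ m₁ ⋯ w k_r m_r` of the index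
`K = (k₁, …, k_r)`. It covers both truncated multiple `t`-star values and, for a constant index,
the complete homogeneous symmetric polynomials in `w k 0, …, w k (n - 1)`. -/
def starSum (w : κ → ℕ → R) : List κ → ℕ → R
  | [], _ => 1
  | k :: K, n => ∑ j ∈ range n, w k j * starSum w K (j + 1)

lemma map_starSum (φ : R →+* S) (w : κ → ℕ → R) (K : List κ) (n : ℕ) :
    φ (starSum w K n) = starSum (fun k j => φ (w k j)) K n := by
  induction K generalizing n with
  | nil => simp [starSum]
  | cons k K ih => simp [starSum, ih]

lemma starSum_mul_const (w : κ → ℕ → R) (c : R) (K : List κ) (n : ℕ) :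
    starSum (fun k j => w k j * c) K n = starSum w K n * c ^ K.length := by
  induction K generalizing n with
  | nil => simp [starSum]
  | cons k K ih =>
    simp only [starSum, ih, List.length_cons, sum_mul]
    exact sum_congr rfl fun j _ => by ring

lemma starSum_replicate_zero (w : κ → ℕ → R) (k : κ) {b : ℕ} (hb : b ≠ 0) :
    starSum w (List.replicate b k) 0 = 0 := by
  obtain ⟨b, rfl⟩ := Nat.exists_eq_succ_of_ne_zero hb
  simp [List.replicate_succ, starSum]

lemma starSum_replicate_succ_eq_sum_antidiagonal (w : κ → ℕ → R) (k : κ) (b n : ℕ) :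
    starSum w (List.replicate b k) (n + 1) =
      ∑ p ∈ antidiagonal b, w k n ^ p.1 * starSum w (List.replicate p.2 k) n := by
  induction b with
  | zero => simp [starSum]
  | succ b ih =>
    rw [Nat.sum_antidiagonal_succ]
    simp only [pow_succ', pow_zero, one_mul, mul_assoc, ← mul_sum, ← ih]
    simp only [List.replicate_succ, starSum, sum_range_succ]

end StarSum

section CompleteHomogeneous

variable {κ 𝕜 : Type*} [NormedField 𝕜] {w : κ → ℕ → 𝕜} {k : κ} {n : ℕ}

lemma summable_norm_starSum_replicate (hw : ∀ j < n, ‖w k j‖ < 1) :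
    Summable fun b => ‖starSum w (List.replicate b k) n‖ := by
  induction n with
  | zero =>
    exact (hasSum_single 0 fun b hb => by rw [starSum_replicate_zero w k hb, norm_zero]).summable
  | succ n ih =>
    have hgeom := summable_norm_geometric_of_norm_lt_one (hw n n.lt_succ_self)
    have hsum := ih fun j hj => hw j (hj.trans n.lt_succ_self)
    simpa only [starSum_replicate_succ_eq_sum_antidiagonal] using
      summable_norm_sum_mul_antidiagonal_of_summable_norm hgeom hsum

lemma hasSum_starSum_replicate [CompleteSpace 𝕜] (hw : ∀ j < n, ‖w k j‖ < 1) :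
    HasSum (fun b => starSum w (List.replicate b k) n) (∏ j ∈ range n, (1 - w k j)⁻¹) := by
  rw [(summable_norm_starSum_replicate hw).of_norm.hasSum_iff]
  induction n with
  | zero =>
    rw [tsum_eq_single 0 fun b => starSum_replicate_zero w k]
    simp [starSum]
  | succ n ih =>
    have hwn := hw n n.lt_succ_self
    have hw' : ∀ j < n, ‖w k j‖ < 1 := fun j hj => hw j (hj.trans n.lt_succ_self)
    simp only [starSum_replicate_succ_eq_sum_antidiagonal]
    rw [← tsum_mul_tsum_eq_tsum_sum_antidiagonal_of_summable_norm
      (summable_norm_geometric_of_norm_lt_one hwn) (summable_norm_starSum_replicate hw'),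
      tsum_geometric_of_norm_lt_one hwn, ih hw', prod_range_succ, mul_comm]

end CompleteHomogeneous

section AntitoneTuples

lemma antitone_fin_cons_iff {α : Type*} [Preorder α] {n : ℕ} {x : α} {m : Fin n → α} :
    Antitone (Fin.cons x m : Fin (n + 1) → α) ↔ (∀ i, m i ≤ x) ∧ Antitone m := by
  simp [antitone_iff_forall_lt, Fin.forall_fin_succ]

lemma antitone_fin_cons_cons_iff {α : Type*} [Preorder α] {n : ℕ} {x y : α} {m : Fin n → α} :
    Antitone (Fin.cons y (Fin.cons x m : Fin (n + 1) → α) : Fin (n + 2) → α) ↔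
      x ≤ y ∧ Antitone (Fin.cons x m : Fin (n + 1) → α) := by
  simp only [antitone_fin_cons_iff (x := y), Fin.forall_fin_succ, Fin.cons_zero, Fin.cons_succ]
  refine ⟨fun h => ⟨h.1.1, h.2⟩, fun h => ⟨⟨h.1, fun i => ?_⟩, h.2⟩⟩
  exact ((antitone_fin_cons_iff.1 h.2).1 i).trans h.1

lemma tsum_fin_cons {α : Type*} {n : ℕ} (f : (Fin (n + 1) → α) → ℝ≥0∞) :
    ∑' m, f m = ∑' x, ∑' m : Fin n → α, f (Fin.cons x m) := by
  rw [← (Fin.consEquiv fun _ => α).tsum_eq, ENNReal.tsum_prod']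
  rfl

variable {κ : Type*} {R : Type*} [CommSemiring R]

/-- The summand `w k₁ m₁ ⋯ w k_r m_r` of the star sum of the index `K = (k₁, …, k_r)`, extended by
zero off the tuples with `m₁ ≥ ⋯ ≥ m_r`. -/
noncomputable def starTerm (w : κ → ℕ → R) (K : List κ) : (Fin K.length → ℕ) → R :=
  {m | Antitone m}.indicator fun m => ∏ i, w (K.get i) (m i)

/-- The summand of the star sum of the index `K`, restricted to tuples bounded by `M`. Prefixing `M`
to the tuple encodes both the bound and the ordering. -/
noncomputable def starTermLE (w : κ → ℕ → R) (K : List κ) (M : ℕ) : (Fin K.length → ℕ) → R :=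
  {m | Antitone (Fin.cons M m : Fin (K.length + 1) → ℕ)}.indicator fun m => ∏ i, w (K.get i) (m i)

lemma map_starTerm {S : Type*} [CommSemiring S] (φ : R →+* S) (w : κ → ℕ → R) (K : List κ)
    (m : Fin K.length → ℕ) : φ (starTerm w K m) = starTerm (fun k j => φ (w k j)) K m := by
  classical
  simp only [starTerm, Set.indicator_apply, apply_ite φ, map_prod, map_zero]

lemma starTerm_cons (w : κ → ℕ → R) (k : κ) (K : List κ) (x : ℕ) (m : Fin K.length → ℕ) :
    starTerm w (k :: K) (Fin.cons x m : Fin (K.length + 1) → ℕ) = w k x * starTermLE w K x m := by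
  classical
  simp only [starTerm, starTermLE, Set.indicator_apply, Set.mem_ofPred_eq, mul_ite, mul_zero]
  exact if_congr Iff.rfl (Fin.prod_univ_succ _) rfl

lemma starTermLE_cons (w : κ → ℕ → R) (k : κ) (K : List κ) (M x : ℕ) (m : Fin K.length → ℕ) :
    starTermLE w (k :: K) M (Fin.cons x m : Fin (K.length + 1) → ℕ) =
      if x ≤ M then w k x * starTermLE w K x m else 0 := by
  classical
  rw [← starTerm_cons]
  simp only [starTerm, starTermLE, Set.indicator_apply, Set.mem_ofPred_eq, ← ite_and]
  exact if_congr antitone_fin_cons_cons_iff rfl rfl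

lemma tsum_starTermLE (w : κ → ℕ → ℝ≥0∞) (K : List κ) (M : ℕ) :
    ∑' m, starTermLE w K M m = starSum w K (M + 1) := by
  induction K generalizing M with
  | nil =>
    refine (tsum_eq_single finZeroElim fun m hm => absurd (funext finZeroElim) hm).trans ?_
    have : Subsingleton (Fin ([] : List κ).length) := inferInstanceAs (Subsingleton (Fin 0))
    simp [starTermLE, starSum, Subsingleton.antitone]
  | cons k K ih =>
    calc ∑' m, starTermLE w (k :: K) M m
        = ∑' x, ∑' m : Fin K.length → ℕ, if x ≤ M then w k x * starTermLE w K x m else 0 := by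
          refine (tsum_fin_cons _).trans ?_
          simp only [starTermLE_cons]
      _ = ∑' x, if x ≤ M then w k x * starSum w K (x + 1) else 0 := by
          refine tsum_congr fun x => ?_
          split_ifs
          · rw [ENNReal.tsum_mul_left, ih]
          · exact tsum_zero
      _ = starSum w (k :: K) (M + 1) := by
          rw [tsum_eq_sum (s := range (M + 1)) fun x hx => if_neg (by simpa using hx)]
          exact sum_congr rfl fun x hx => if_pos (Nat.lt_succ_iff.1 (mem_range.1 hx))

lemma tsum_starTerm_cons (w : κ → ℕ → ℝ≥0) (k : κ) (K : List κ) :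
    ∑' m, starTerm w (k :: K) m = ∑' x, w k x * starSum w K (x + 1) := by
  have starTerm_coe (m) : ((starTerm w (k :: K) m : ℝ≥0) : ℝ≥0∞) =
      starTerm (fun k j => (w k j : ℝ≥0∞)) (k :: K) m :=
    map_starTerm ENNReal.ofNNRealHom w (k :: K) m
  have starSum_coe (n) : ((starSum w K n : ℝ≥0) : ℝ≥0∞) = starSum (fun k j => (w k j : ℝ≥0∞)) K n :=
    map_starSum ENNReal.ofNNRealHom w K n
  rw [NNReal.tsum_eq_toNNReal_tsum, NNReal.tsum_eq_toNNReal_tsum]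
  congr 1
  simp only [starTerm_coe, ENNReal.coe_mul, starSum_coe]
  refine (tsum_fin_cons _).trans (tsum_congr fun x => ?_)
  simp only [starTerm_cons, ENNReal.tsum_mul_left, tsum_starTermLE]

end AntitoneTuples

section OddWeight

/-- The weight `1 / (2j+1)^k`, so that `starSum (oddWeight 𝕜)` is the truncated multiple `t`-star
value, its variables being the odd numbers `2j+1`. -/
def oddWeight (𝕜 : Type*) [DivisionSemiring 𝕜] (k j : ℕ) : 𝕜 := (((2 * j + 1 : ℕ) : 𝕜) ^ k)⁻¹

lemma map_oddWeight {𝕜 𝕝 : Type*} [DivisionSemiring 𝕜] [DivisionSemiring 𝕝] (φ : 𝕜 →+* 𝕝) :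
    (fun k j => φ (oddWeight 𝕜 k j)) = oddWeight 𝕝 := by
  funext k j
  simp only [oddWeight, map_inv₀, map_pow, map_natCast]

lemma map_starSum_oddWeight {𝕜 𝕝 : Type*} [Semifield 𝕜] [Semifield 𝕝] (φ : 𝕜 →+* 𝕝)
    (K : List ℕ) (n : ℕ) : φ (starSum (oddWeight 𝕜) K n) = starSum (oddWeight 𝕝) K n := by
  rw [map_starSum, map_oddWeight]

lemma starSum_oddWeight_nonneg (K : List ℕ) (n : ℕ) : 0 ≤ starSum (oddWeight ℝ) K n := by
  rw [← map_starSum_oddWeight NNReal.toRealHom]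
  exact NNReal.coe_nonneg _

lemma norm_starSum_oddWeight (𝕜 : Type*) [RCLike 𝕜] (K : List ℕ) (n : ℕ) :
    ‖starSum (oddWeight 𝕜) K n‖ = starSum (oddWeight ℝ) K n := by
  rw [← map_starSum_oddWeight (algebraMap ℝ 𝕜), norm_algebraMap',
    Real.norm_of_nonneg (starSum_oddWeight_nonneg K n)]

lemma norm_oddWeight (𝕜 : Type*) [RCLike 𝕜] (k j : ℕ) : ‖oddWeight 𝕜 k j‖ = oddWeight ℝ k j := by
  rw [oddWeight, norm_inv, norm_pow, RCLike.norm_natCast, oddWeight]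

lemma multTStar_eq_tsum_starTerm (K : List ℕ) :
    multTStar K = ∑' m, starTerm (oddWeight ℝ) K m := by
  classical
  have odd_injective : Function.Injective fun n : ℕ => 2 * n + 1 := fun a b h => by
    simpa using h
  rw [multTStar, ← (odd_injective.comp_left (α := Fin K.length)).tsum_eq]
  · refine tsum_congr fun m => ?_
    simp [starTerm, Set.indicator_apply, antitone_iff_forall_lt, oddWeight]
  · intro m hm
    have hodd : ∀ i, Odd (m i) := by
      by_contra h
      simp [h] at hm
    choose n hn using hodd
    exact ⟨n, funext fun i => (hn i).symm⟩

lemma multTStar_cons (k : ℕ) (K : List ℕ) :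
    multTStar (k :: K) = ∑' N, oddWeight ℝ k N * starSum (oddWeight ℝ) K (N + 1) := by
  rw [multTStar_eq_tsum_starTerm, ← map_oddWeight NNReal.toRealHom]
  simp only [← map_starTerm, ← map_starSum, ← map_mul]
  exact NNReal.coe_tsum.symm.trans <|
    (congrArg _ (tsum_starTerm_cons (oddWeight ℝ≥0) k K)).trans NNReal.coe_tsum

end OddWeight

section GeneratingFunction

lemma hasSum_inv_pow_add_two_mul_pow {𝕜 : Type*} [NormedField 𝕜] {c u : 𝕜} (h : ‖u‖ < ‖c‖) :
    HasSum (fun a : ℕ => (c ^ (a + 2))⁻¹ * u ^ a) (c * (c - u))⁻¹ := by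
  have hc : c ≠ 0 := norm_pos_iff.1 ((norm_nonneg u).trans_lt h)
  have hratio : ‖u / c‖ < 1 := by rwa [norm_div, div_lt_one (norm_pos_iff.2 hc)]
  have hvalue : (c * (c - u))⁻¹ = (c ^ 2)⁻¹ * (1 - u / c)⁻¹ := by
    rw [one_sub_div hc, inv_div, mul_inv]
    field_simp
  rw [hvalue]
  refine ((hasSum_geometric_of_norm_lt_one hratio).mul_left _).congr_fun fun a => ?_
  rw [div_pow, pow_add]
  field_simp

variable {𝕜 : Type*} [RCLike 𝕜] {u v : 𝕜}

/-- The summand at `(N, a, b)` of the height-one generating function: the part of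
`t*(a+2, {1}^b) u^a v^b` in which the largest summation variable is `2N+1`. -/
def heightOneTerm (u v : 𝕜) (q : ℕ × ℕ × ℕ) : 𝕜 :=
  oddWeight 𝕜 (q.2.1 + 2) q.1 * u ^ q.2.1 *
    (starSum (oddWeight 𝕜) (List.replicate q.2.2 1) (q.1 + 1) * v ^ q.2.2)

/-- The product `∏_{i < n} (1 - v/(2i+1))⁻¹`, the generating function in `v` of the complete
homogeneous symmetric polynomials in `1, 1/3, …, 1/(2n-1)`. -/
def oddEulerProd (v : 𝕜) (n : ℕ) : 𝕜 := ∏ i ∈ range n, (1 - oddWeight 𝕜 1 i * v)⁻¹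

/-- The part of the height-one generating function with largest summation variable `2N+1`. -/
def heightOneSlice (u v : 𝕜) (N : ℕ) : 𝕜 :=
  (((2 * N + 1 : ℕ) : 𝕜) * ((2 * N + 1 : ℕ) - u))⁻¹ * oddEulerProd v (N + 1)

lemma norm_lt_norm_odd (hu : ‖u‖ < 1) (N : ℕ) : ‖u‖ < ‖((2 * N + 1 : ℕ) : 𝕜)‖ := by
  rw [RCLike.norm_natCast]
  exact hu.trans_le (by simp)

lemma norm_oddWeight_one_mul_lt_one (hv : ‖v‖ < 1) (j : ℕ) : ‖oddWeight 𝕜 1 j * v‖ < 1 := by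
  have h := norm_lt_norm_odd hv j
  rw [oddWeight, pow_one, norm_mul, norm_inv, inv_mul_lt_one₀ ((norm_nonneg v).trans_lt h)]
  exact h

lemma hasSum_starSum_oddWeight_replicate_one (hv : ‖v‖ < 1) (n : ℕ) :
    HasSum (fun b => starSum (oddWeight 𝕜) (List.replicate b 1) n * v ^ b) (oddEulerProd v n) := by
  have h := hasSum_starSum_replicate (w := fun k j => oddWeight 𝕜 k j * v)
    (n := n) fun j _ => norm_oddWeight_one_mul_lt_one hv j
  simpa only [starSum_mul_const, List.length_replicate, oddEulerProd] using h

lemma hasSum_heightOneTerm (hu : ‖u‖ < 1) (hv : ‖v‖ < 1) (N : ℕ) :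
    HasSum (fun p => heightOneTerm u v (N, p)) (heightOneSlice u v N) := by
  have ha : HasSum (fun a => oddWeight 𝕜 (a + 2) N * u ^ a)
      (((2 * N + 1 : ℕ) : 𝕜) * ((2 * N + 1 : ℕ) - u))⁻¹ :=
    hasSum_inv_pow_add_two_mul_pow (norm_lt_norm_odd hu N)
  have hb := hasSum_starSum_oddWeight_replicate_one hv (N + 1)
  have hab := summable_mul_of_summable_norm ha.summable.norm hb.summable.norm
  simpa only [heightOneTerm, heightOneSlice] using ha.mul hb hab

lemma norm_heightOneTerm (u v : 𝕜) (q : ℕ × ℕ × ℕ) :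
    ‖heightOneTerm u v q‖ = heightOneTerm ‖u‖ ‖v‖ q := by
  simp only [heightOneTerm, norm_mul, norm_pow, norm_oddWeight, norm_starSum_oddWeight]

lemma oddEulerProd_nonneg {y : ℝ} (hy : y < 1) (n : ℕ) : 0 ≤ oddEulerProd y n := by
  refine prod_nonneg fun i _ => inv_nonneg.2 (sub_nonneg.2 ?_)
  rw [oddWeight, pow_one, inv_mul_le_one₀ (by positivity)]
  push_cast
  linarith [(Nat.cast_nonneg i : (0 : ℝ) ≤ i)]

lemma oddEulerProd_succ_div {y : ℝ} (hy : y < 1) (n : ℕ) :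
    oddEulerProd y (n + 1) / (2 * n + 1) = oddEulerProd y n / (2 * n + 1 - y) := by
  have hpos : (0 : ℝ) < 2 * n + 1 - y := by linarith [(Nat.cast_nonneg n : (0 : ℝ) ≤ n)]
  rw [oddEulerProd, prod_range_succ, ← oddEulerProd, oddWeight]
  push_cast
  field_simp

lemma heightOneSlice_nonneg {x y : ℝ} (hx : x < 1) (hy : y < 1) (N : ℕ) :
    0 ≤ heightOneSlice x y N := by
  refine mul_nonneg (inv_nonneg.2 (mul_nonneg (by positivity) ?_)) (oddEulerProd_nonneg hy _)
  push_cast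
  linarith [(Nat.cast_nonneg N : (0 : ℝ) ≤ N)]

lemma heightOneSlice_le_telescope {x y : ℝ} (hx₀ : 0 ≤ x) (hx : x < 1) (hy : y < 1) (N : ℕ) :
    heightOneSlice x y N ≤ 3 / (1 - x) * (oddEulerProd y (N + 1) / (2 * N + 1) -
      oddEulerProd y (N + 1 + 1) / (2 * (N + 1 : ℕ) + 1)) := by
  have : (0 : ℝ) ≤ N := N.cast_nonneg
  have hxN : 0 < 2 * (N : ℝ) + 1 - x := by linarith
  have hyN : 0 < 2 * ((N : ℝ) + 1) + 1 - y := by linarith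
  have hx' : 0 < 1 - x := by linarith
  have hfactor : (2 * (N : ℝ) + 1 - x)⁻¹ ≤
      3 / (1 - x) * ((2 - y) / (2 * (N + 1) + 1 - y)) := by
    rw [div_mul_div_comm, inv_eq_one_div, div_le_div_iff₀ hxN (mul_pos hx' hyN)]
    nlinarith
  have hP := oddEulerProd_nonneg hy (N + 1)
  rw [oddEulerProd_succ_div hy (N + 1), heightOneSlice]
  push_cast
  calc ((2 * (N : ℝ) + 1) * (2 * N + 1 - x))⁻¹ * oddEulerProd y (N + 1)
      = oddEulerProd y (N + 1) / (2 * N + 1) * (2 * (N : ℝ) + 1 - x)⁻¹ := by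
        rw [mul_inv]; ring
    _ ≤ oddEulerProd y (N + 1) / (2 * N + 1) *
          (3 / (1 - x) * ((2 - y) / (2 * (N + 1) + 1 - y))) := by gcongr
    _ = _ := by field_simp; ring

lemma summable_heightOneSlice {x y : ℝ} (hx₀ : 0 ≤ x) (hx : x < 1) (hy : y < 1) :
    Summable (heightOneSlice x y) := by
  have : 0 < 1 - x := sub_pos.2 hx
  set e : ℕ → ℝ := fun N => oddEulerProd y (N + 1) / (2 * N + 1)
  have e_nonneg (N) : 0 ≤ e N := div_nonneg (oddEulerProd_nonneg hy _) (by positivity)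
  refine summable_of_sum_range_le (c := 3 / (1 - x) * e 0) (heightOneSlice_nonneg hx hy) fun n => ?_
  calc ∑ N ∈ range n, heightOneSlice x y N
      ≤ ∑ N ∈ range n, 3 / (1 - x) * (e N - e (N + 1)) :=
        sum_le_sum fun N _ => heightOneSlice_le_telescope hx₀ hx hy N
    _ = 3 / (1 - x) * (e 0 - e n) := by rw [← mul_sum, sum_range_sub']
    _ ≤ 3 / (1 - x) * e 0 := by gcongr; exact sub_le_self _ (e_nonneg n)

lemma summable_heightOneTerm (hu : ‖u‖ < 1) (hv : ‖v‖ < 1) : Summable (heightOneTerm u v) := by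
  refine Summable.of_norm ?_
  simp only [norm_heightOneTerm]
  have hfiber := hasSum_heightOneTerm (u := ‖u‖) (v := ‖v‖)
    (by rwa [norm_norm]) (by rwa [norm_norm])
  refine (summable_prod_of_nonneg fun q => ?_).2 ⟨fun N => (hfiber N).summable, ?_⟩
  · exact norm_heightOneTerm u v q ▸ norm_nonneg _
  · simpa only [(hfiber _).tsum_eq] using summable_heightOneSlice (norm_nonneg u) hu hv

lemma multTStar_mul_pow_eq_tsum_heightOneTerm (u v : ℂ) (p : ℕ × ℕ) :
    (multTStar ((p.1 + 2) :: List.replicate p.2 1) : ℂ) * u ^ p.1 * v ^ p.2 =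
      ∑' N, heightOneTerm u v (N, p) := by
  have oddWeight_coe (k j) : ((oddWeight ℝ k j : ℝ) : ℂ) = oddWeight ℂ k j :=
    congrFun₂ (map_oddWeight Complex.ofRealHom) k j
  have starSum_coe (K n) : ((starSum (oddWeight ℝ) K n : ℝ) : ℂ) = starSum (oddWeight ℂ) K n :=
    map_starSum_oddWeight Complex.ofRealHom K n
  rw [multTStar_cons, Complex.ofReal_tsum, ← tsum_mul_right, ← tsum_mul_right]
  refine tsum_congr fun N => ?_
  rw [Complex.ofReal_mul, oddWeight_coe, starSum_coe, heightOneTerm]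
  ring

end GeneratingFunction

section Pochhammer

lemma poch_succ (a : ℂ) (n : ℕ) : poch a (n + 1) = poch a n * (a + n) :=
  prod_range_succ _ n

lemma poch_succ_left (a : ℂ) (n : ℕ) : poch a (n + 1) = a * poch (a + 1) n := by
  rw [poch, prod_range_succ', mul_comm, poch]
  push_cast
  simp only [add_zero, add_assoc, add_comm (1 : ℂ)]

lemma poch_one (n : ℕ) : poch 1 n = n.factorial := by
  rw [← prod_range_add_one_eq_factorial, poch]
  push_cast
  simp only [add_comm]

lemma add_natCast_ne_zero {a : ℂ} (ha : 0 < a.re) (n : ℕ) : a + n ≠ 0 := by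
  intro h
  have : a.re + n = 0 := by simpa using congrArg Complex.re h
  linarith [(Nat.cast_nonneg n : (0 : ℝ) ≤ n)]

lemma poch_ne_zero {a : ℂ} (ha : 0 < a.re) (n : ℕ) : poch a n ≠ 0 :=
  prod_ne_zero_iff.2 fun i _ => add_natCast_ne_zero ha i

lemma poch_div_poch_add_one {a : ℂ} (ha : 0 < a.re) (n : ℕ) :
    poch a n / poch (a + 1) n = a / (a + n) := by
  have ha₁ : 0 < (a + 1).re := by simpa using ha.trans (lt_add_one _)
  rw [div_eq_div_iff (poch_ne_zero ha₁ n) (add_natCast_ne_zero ha n), ← poch_succ, poch_succ_left]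

lemma oddEulerProd_eq_poch_div (v : ℂ) (n : ℕ) :
    oddEulerProd v n = poch (1 / 2) n / poch ((1 - v) / 2) n := by
  rw [oddEulerProd, poch, poch, ← prod_div_distrib]
  refine prod_congr rfl fun i _ => ?_
  have hi : (2 * i + 1 : ℂ) ≠ 0 := by exact_mod_cast (2 * i).succ_ne_zero
  have hnum : (1 / 2 + i : ℂ) = (2 * i + 1) / 2 := by ring
  have hden : (1 - v) / 2 + i = (2 * i + 1 - v) / 2 := by ring
  rw [oddWeight, pow_one, inv_mul_eq_div, hnum, hden, div_div_div_cancel_right₀ two_ne_zero]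
  push_cast
  rw [one_sub_div hi, inv_div]

lemma re_half_one_sub_pos {u : ℂ} (hu : ‖u‖ < 1) : 0 < ((1 - u) / 2).re := by
  have := (Complex.re_le_norm u).trans_lt hu
  simpa using this

lemma heightOneSlice_eq_hyp3F2_term {u : ℂ} (hu : ‖u‖ < 1) (v : ℂ) (n : ℕ) :
    heightOneSlice u v n = ((1 - u) * (1 - v))⁻¹ *
      (poch ((1 - u) / 2) n * poch (1 / 2) n * poch 1 n /
        (n.factorial * poch ((3 - u) / 2) n * poch ((3 - v) / 2) n) * 1 ^ n) := by
  have shift (w : ℂ) : (3 - w) / 2 = (1 - w) / 2 + 1 := by ring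
  have slice_den : ((2 * n + 1 : ℕ) : ℂ) * ((2 * n + 1 : ℕ) - u) =
      4 * (1 / 2 + n) * ((1 - u) / 2 + n) := by
    push_cast
    ring
  have prefactor : (1 - u) * (1 - v) = 4 * ((1 - u) / 2) * ((1 - v) / 2) := by ring
  have ha := re_half_one_sub_pos hu
  rw [heightOneSlice, oddEulerProd_eq_poch_div, poch_one, shift, shift, slice_den, prefactor]
  generalize (1 - u) / 2 = a at *
  generalize (1 - v) / 2 = b at *
  have ha₀ : a ≠ 0 := by simpa using add_natCast_ne_zero ha 0
  have hhalf : (1 / 2 + n : ℂ) ≠ 0 := add_natCast_ne_zero (by norm_num) n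
  have hn : (n.factorial : ℂ) ≠ 0 := by exact_mod_cast n.factorial_ne_zero
  calc (4 * (1 / 2 + n) * (a + n))⁻¹ * (poch (1 / 2) (n + 1) / poch b (n + 1))
      = (4 * a * b)⁻¹ * (a / (a + n)) * (poch (1 / 2) n / poch (b + 1) n) := by
        rw [poch_succ, poch_succ_left b]
        generalize (1 / 2 : ℂ) = h at *
        field_simp
    _ = (4 * a * b)⁻¹ * (poch a n * poch (1 / 2) n * n.factorial /
          (n.factorial * poch (a + 1) n * poch (b + 1) n) * 1 ^ n) := by
        rw [← poch_div_poch_add_one ha, one_pow, mul_one]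
        field_simp

end Pochhammer

theorem height_one_multiple_t_star_general {u v : ℂ} (hu : ‖u‖ < 1) (hv : ‖v‖ < 1) :
    HasSum (fun p : ℕ × ℕ =>
        (multTStar ((p.1 + 2) :: List.replicate p.2 1) : ℂ) * u ^ p.1 * v ^ p.2)
      (((1 - u) * (1 - v))⁻¹ *
        hyp3F2 ((1 - u) / 2) (1 / 2) 1 ((3 - u) / 2) ((3 - v) / 2) 1) := by
  have hterm := summable_heightOneTerm hu hv
  have hvalue : ((1 - u) * (1 - v))⁻¹ *
      hyp3F2 ((1 - u) / 2) (1 / 2) 1 ((3 - u) / 2) ((3 - v) / 2) 1 =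
        ∑' p, ∑' N, heightOneTerm u v (N, p) := by
    rw [Summable.tsum_comm (f := fun N p => heightOneTerm u v (N, p)) hterm, hyp3F2,
      ← tsum_mul_left]
    refine tsum_congr fun N => ?_
    rw [(hasSum_heightOneTerm hu hv N).tsum_eq, heightOneSlice_eq_hyp3F2_term hu v]
  rw [hvalue]
  simp only [multTStar_mul_pow_eq_tsum_heightOneTerm]
  exact hterm.prod_symm.prod.hasSum

/-- Generating function of height-one multiple `t`-star values (Corollary 2.2). -/
theorem height_one_multiple_t_star :
    ∃ δ > (0 : ℝ), ∀ u v : ℝ, |u| < δ → |v| < δ →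
      Summable (fun p : ℕ × ℕ =>
        multTStar ((p.1 + 2) :: List.replicate p.2 1) * u ^ p.1 * v ^ p.2) ∧
      ((∑' p : ℕ × ℕ,
          multTStar ((p.1 + 2) :: List.replicate p.2 1) * u ^ p.1 * v ^ p.2 : ℝ) : ℂ)
        = ((1 - (u : ℂ)) * (1 - (v : ℂ)))⁻¹ *
            hyp3F2 ((1 - (u : ℂ)) / 2) (1 / 2) 1
              ((3 - (u : ℂ)) / 2) ((3 - (v : ℂ)) / 2) 1 := by
  refine ⟨1, one_pos, fun u v hu hv => ?_⟩
  have h := height_one_multiple_t_star_general (u := u) (v := v)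
    (by rwa [Complex.norm_real]) (by rwa [Complex.norm_real])
  exact ⟨by exact_mod_cast h.summable, by exact_mod_cast h.tsum_eq⟩
end

section
/- There exists δ > 0 such that for all real u, w with |u|, |w| < δ, 1 + ∑_{k ≥ 2n, n ≥ 1} G_0(k,n,n) u^{k−2n} w^n = exp( ∑_{n ≥ 2} (t(n)/n)(u^n − x^n − y^n) ), where x and y are the two (possibly complex) roots of X² − uX + w = 0 (so x + y = u and xy = w; the quantity x^n + y^n is real), and both series converge absolutely. -/
open scoped BigOperators

/-!
An admissible index of maximal height is an index all of whose entries are at least `2`, that is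
`L.map (· + 2)` for an arbitrary list `L` of natural numbers. The left-hand side is therefore
`∑_L t(L + 2) u^(sum L) w^(length L)`, the constant `1` being the term of the empty list. Such a
sum over increasing tuples with arbitrary labels is the expansion of a product, namely of
`∏ (1 + ∑_e w u^e / M^(e + 2)) = ∏ (1 + w / (M (M - u))) = ∏ (1 - x/M) (1 - y/M) / (1 - u/M)`
over the odd `M > 0`. Because `x + y = u`, the last factor is `exp (φ(u/M) - φ(x/M) - φ(y/M))`
with `φ(s) = -log (1 - s) - s = ∑_{n ≥ 2} sⁿ/n`, and summing `φ(z/M)` over `M` first gives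
`∑_{n ≥ 2} (t(n)/n) zⁿ`.
-/

section ProductExpansion

variable {ι κ 𝕜 : Type*} [NormedField 𝕜] [CompleteSpace 𝕜]

theorem summable_norm_and_hasSum_prod_pi {n : ℕ} {c : Fin n → κ → 𝕜}
    (hc : ∀ i, Summable fun k ↦ ‖c i k‖) :
    (Summable fun e : Fin n → κ ↦ ‖∏ i, c i (e i)‖) ∧
      HasSum (fun e : Fin n → κ ↦ ∏ i, c i (e i)) (∏ i, ∑' k, c i k) := by
  induction n with
  | zero => exact ⟨(hasSum_fintype _).summable, by simp [hasSum_unique]⟩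
  | succ n ih =>
    obtain ⟨htail_norm, htail⟩ := ih fun i ↦ hc i.succ
    have hsplit : (fun e : Fin (n + 1) → κ ↦ ∏ i, c i (e i)) ∘ Fin.consEquiv (fun _ ↦ κ) =
        fun p : κ × (Fin n → κ) ↦ c 0 p.1 * ∏ i, c i.succ (p.2 i) := by
      ext p
      simp [Fin.consEquiv, Fin.prod_univ_succ]
    have hnorm := (hc 0).mul_norm htail_norm
    constructor
    · rw [← (Fin.consEquiv fun _ ↦ κ).summable_iff]
      exact hnorm.congr fun p ↦ (congrArg norm (congrFun hsplit p)).symm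
    · rw [← (Fin.consEquiv fun _ ↦ κ).hasSum_iff, hsplit, Fin.prod_univ_succ]
      have hprod := (hc 0).of_norm.hasSum.mul htail hnorm.of_norm
      exact hprod

/-- A finite subset of `ι` is the same as a strictly increasing tuple in `ι`. -/
def finEmbEquivFinset (ι : Type*) [LinearOrder ι] : (Σ n, Fin n ↪o ι) ≃ Finset ι :=
  (Equiv.sigmaCongrRight fun _ ↦ Set.powersetCard.ofFinEmbEquiv).trans
    Set.powersetCard.prodEquiv

theorem prod_finEmbEquivFinset [LinearOrder ι] {M : Type*} [CommMonoid M] (f : ι → M)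
    (d : Σ n, Fin n ↪o ι) : ∏ i ∈ finEmbEquivFinset ι d, f i = ∏ j, f (d.2 j) :=
  Finset.prod_map _ d.2.toEmbedding f

/-- A list in `κ` together with a strictly increasing tuple in `ι` of the same length, regarded as
such a tuple with a label in `κ` on each entry. -/
def listEmbEquivLabelledEmb (ι κ : Type*) [LinearOrder ι] :
    (Σ L : List κ, Fin L.length ↪o ι) ≃ Σ d : (Σ n, Fin n ↪o ι), (Fin d.1 → κ) :=
  (Equiv.sigmaCongrLeft (β := fun e : Σ n, Fin n → κ ↦ Fin e.1 ↪o ι) List.equivSigmaTuple).trans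
    { toFun x := ⟨⟨x.1.1, x.2⟩, x.1.2⟩
      invFun x := ⟨⟨x.1.1, x.2⟩, x.1.2⟩ }

theorem summable_prod_labelledEmb [LinearOrder ι] {c : ι → κ → 𝕜}
    (hc : Summable fun p : ι × κ ↦ ‖c p.1 p.2‖) :
    Summable fun x : Σ d : (Σ n, Fin n ↪o ι), (Fin d.1 → κ) ↦ ∏ j, c (x.1.2 j) (x.2 j) := by
  refine .of_norm ((summable_sigma_of_nonneg fun _ ↦ norm_nonneg _).2
    ⟨fun d ↦ (summable_norm_and_hasSum_prod_pi fun j ↦ hc.prod_factor (d.2 j)).1, ?_⟩)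
  have hrow (d : Σ n, Fin n ↪o ι) : ∑' e : Fin d.1 → κ, ‖∏ j, c (d.2 j) (e j)‖ =
      ∏ i ∈ finEmbEquivFinset ι d, ∑' k, ‖c i k‖ := by
    simp only [prod_finEmbEquivFinset, norm_prod]
    refine (summable_norm_and_hasSum_prod_pi (c := fun j k ↦ ‖c (d.2 j) k‖) fun j ↦ ?_).2.tsum_eq
    simpa only [norm_norm] using hc.prod_factor (d.2 j)
  have hsubsets : Summable fun s : Finset ι ↦ ∏ i ∈ s, ∑' k, ‖c i k‖ :=
    summable_finsetProd_of_summable_nonneg (fun _ ↦ tsum_nonneg fun _ ↦ norm_nonneg _) hc.prod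
  have hembs := hsubsets.comp_injective (finEmbEquivFinset ι).injective
  exact hembs.congr fun d ↦ (hrow d).symm

theorem hasSum_list_tsum_prod [LinearOrder ι] {c : ι → κ → 𝕜}
    (hc : Summable fun p : ι × κ ↦ ‖c p.1 p.2‖) :
    HasSum (fun L : List κ ↦ ∑' m : Fin L.length ↪o ι, ∏ j, c (m j) (L.get j))
      (∏' i, (1 + ∑' k, c i k)) := by
  have hsummable := summable_prod_labelledEmb hc
  have hsubsets : HasSum (fun s : Finset ι ↦ ∏ i ∈ s, ∑' k, c i k)
      (∑' x : Σ d : (Σ n, Fin n ↪o ι), (Fin d.1 → κ), ∏ j, c (x.1.2 j) (x.2 j)) := by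
    rw [← (finEmbEquivFinset ι).hasSum_iff]
    simp only [Function.comp_def, prod_finEmbEquivFinset]
    exact hsummable.hasSum.sigma fun d ↦
      (summable_norm_and_hasSum_prod_pi fun j ↦ hc.prod_factor (d.2 j)).2
  have hlists := (listEmbEquivLabelledEmb ι κ).hasSum_iff.2 hsummable.hasSum
  rw [(hasProd_one_add_of_hasSum_prod hsubsets).tprod_eq]
  exact hlists.sigma fun L ↦ (hlists.summable.sigma_factor L).hasSum

end ProductExpansion

section MaximalHeight

open OrderDual

/-- The order dual turns the strictly decreasing tuples of `multT` into order embeddings. -/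
theorem multT_map (f : ℕ → ℕ) (L : List ℕ) :
    multT (L.map f) = ∑' m : Fin L.length ↪o ℕᵒᵈ,
      ∏ j, ((2 * ((ofDual (m j) : ℕ) : ℝ) + 1) ^ f (L.get j))⁻¹ := by
  have hlen : (L.map f).length = L.length := List.length_map f
  let φ (m : Fin L.length ↪o ℕᵒᵈ) (i : Fin (L.map f).length) : ℕ :=
    2 * ofDual (m (Fin.cast hlen i)) + 1
  have hφ : Function.Injective φ := fun a b hab ↦ by
    ext i
    simpa [φ] using congrFun hab (Fin.cast hlen.symm i)
  unfold multT
  rw [← hφ.tsum_eq]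
  · refine tsum_congr fun m ↦ ?_
    have hlt {i j : Fin (L.map f).length} (hij : i < j) : φ m j < φ m i := by
      have : ofDual (m (Fin.cast hlen j)) < ofDual (m (Fin.cast hlen i)) := m.strictMono hij
      simp only [φ]
      lia
    rw [if_pos ⟨fun i ↦ ⟨_, rfl⟩, fun i j ↦ hlt⟩]
    exact Fintype.prod_equiv (finCongr hlen) _ _ fun i ↦ by simp [φ]
  · intro m hm
    obtain ⟨hodd, hanti⟩ := (ite_ne_right_iff.1 hm).1
    choose q hq using hodd
    refine ⟨OrderEmbedding.ofStrictMono (fun i ↦ toDual (q (Fin.cast hlen.symm i))) ?_, ?_⟩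
    · intro i j hij
      have := hanti (Fin.cast hlen.symm i) (Fin.cast hlen.symm j) hij
      rw [toDual_lt_toDual]
      grind
    · ext i
      exact (hq i).symm

theorem sum_map_add_const (L : List ℕ) (c : ℕ) : (L.map (· + c)).sum = L.sum + c * L.length := by
  simp [List.sum_map_add, mul_comm]

theorem maximalHeight_iff_exists_map_add_two {K : List ℕ} {a n : ℕ} :
    (Admissible K ∧ K.sum = a + 2 * n + 2 ∧ K.length = n + 1 ∧
      K.countP (fun i ↦ decide (2 ≤ i)) = n + 1) ↔
    ∃ L : List ℕ, (L.sum = a ∧ L.length = n + 1) ∧ L.map (· + 2) = K := by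
  constructor
  · rintro ⟨-, hsum, hlen, hcount⟩
    have htwo : ∀ k ∈ K, 2 ≤ k := by simpa using List.countP_eq_length.1 (hcount.trans hlen.symm)
    have hK : (K.map (· - 2)).map (· + 2) = K := by
      rw [List.map_map]
      exact (List.map_congr_left fun k hk ↦ Nat.sub_add_cancel (htwo k hk)).trans K.map_id
    have hsum' := sum_map_add_const (K.map (· - 2)) 2
    rw [hK, List.length_map] at hsum'
    exact ⟨K.map (· - 2), ⟨by lia, by simpa using hlen⟩, hK⟩
  · rintro ⟨L, ⟨rfl, hlen⟩, rfl⟩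
    refine ⟨⟨by simp, ?_⟩, ?_, by simpa using hlen, ?_⟩
    · cases L <;> simp_all
    · rw [sum_map_add_const, hlen]
      lia
    · simp [List.countP_map, ← hlen]

theorem G0h_maximalHeight_eq_tsum (a n : ℕ) : G0h (a + 2 * n + 2) (n + 1) (n + 1) =
    ∑' L : List ℕ, if L.sum = a ∧ L.length = n + 1 then multT (L.map (· + 2)) else 0 := by
  have hinj : Function.Injective (List.map (· + 2)) :=
    List.map_injective_iff.2 (add_left_injective 2)
  unfold G0h
  rw [← hinj.tsum_eq]
  · refine tsum_congr fun L ↦ if_congr (maximalHeight_iff_exists_map_add_two.trans ?_) rfl rfl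
    simp [hinj.eq_iff]
  · intro K hK
    obtain ⟨L, -, hL⟩ := maximalHeight_iff_exists_map_add_two.1 (ite_ne_right_iff.1 hK).1
    exact ⟨L, hL⟩

theorem multT_nil : multT [] = 1 := by
  simp [multT]

theorem hasSum_G0h_maximalHeight {u w T : ℂ}
    (h : HasSum (fun L : List ℕ ↦ multT (L.map (· + 2)) * u ^ L.sum * w ^ L.length) T) :
    HasSum (fun p : ℕ × ℕ ↦
      (G0h (p.1 + 2 * p.2 + 2) (p.2 + 1) (p.2 + 1) : ℂ) * u ^ p.1 * w ^ (p.2 + 1)) (T - 1) := by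
  let summand (L : List ℕ) : ℂ :=
    if L = [] then 0 else multT (L.map (· + 2)) * u ^ L.sum * w ^ L.length
  have hnonempty : HasSum summand (T - 1) := by
    simpa [multT_nil] using hasSum_ite_sub_hasSum h []
  -- The truncated `L.length - 1` is harmless: `summand` vanishes at the empty list.
  have hfibres := hnonempty.tsum_fiberwise fun L ↦ (L.sum, L.length - 1)
  refine hfibres.congr_fun fun ⟨a, n⟩ ↦ ?_
  rw [G0h_maximalHeight_eq_tsum, Complex.ofReal_tsum, ← tsum_mul_right, ← tsum_mul_right]
  refine (tsum_congr fun L ↦ ?_).trans (tsum_subtype _ summand).symm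
  rcases eq_or_ne L [] with rfl | hL
  · simp [summand, Set.indicator]
  · have hlen : L.length = n + 1 ↔ L.length - 1 = n := by
      have := List.length_pos_iff.2 hL
      lia
    by_cases hfibre : L.sum = a ∧ L.length = n + 1
    · simp [summand, Set.indicator, hL, hfibre]
    · simp [summand, Set.indicator, ← hlen, hfibre]

end MaximalHeight

section OddLog

theorem two_mul_add_one_ne_zero {R : Type*} [NonAssocSemiring R] [CharZero R] (m : ℕ) :
    (2 * m + 1 : R) ≠ 0 :=
  mod_cast Nat.succ_ne_zero (2 * m)

theorem norm_two_mul_add_one (m : ℕ) : ‖(2 * m + 1 : ℂ)‖ = 2 * m + 1 :=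
  mod_cast Complex.norm_natCast (2 * m + 1)

theorem norm_div_two_mul_add_one_le (z : ℂ) (m : ℕ) : ‖z / (2 * m + 1)‖ ≤ ‖z‖ := by
  rw [norm_div, norm_two_mul_add_one]
  exact div_le_self (norm_nonneg z) (by linarith [m.cast_nonneg (α := ℝ)])

theorem one_sub_div_two_mul_add_one_ne_zero {z : ℂ} (hz : ‖z‖ < 1) (m : ℕ) :
    1 - z / (2 * m + 1) ≠ 0 := by
  rw [sub_ne_zero]
  intro h
  have := (norm_div_two_mul_add_one_le z m).trans_lt hz
  simp [← h] at this

theorem summable_one_div_odd_pow {k : ℕ} (hk : 1 < k) :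
    Summable fun m : ℕ ↦ 1 / (2 * (m : ℝ) + 1) ^ k := by
  have hinj : Function.Injective fun m : ℕ ↦ 2 * m + 1 := fun a b h ↦ by simpa using h
  exact ((Real.summable_one_div_nat_pow.2 hk).comp_injective hinj).congr fun m ↦ by simp

theorem summable_norm_pow_div_odd_pow {z : ℂ} (hz : ‖z‖ < 1) :
    Summable fun p : ℕ × ℕ ↦ ‖z ^ p.2 / (2 * p.1 + 1 : ℂ) ^ (p.2 + 2)‖ := by
  refine .of_nonneg_of_le (fun _ ↦ norm_nonneg _) (fun ⟨m, n⟩ ↦ ?_)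
    ((summable_one_div_odd_pow one_lt_two).mul_of_nonneg
      (summable_geometric_of_lt_one (norm_nonneg z) hz) (fun _ ↦ by positivity)
      fun _ ↦ by positivity)
  calc ‖z ^ n / (2 * m + 1 : ℂ) ^ (n + 2)‖ = 1 / (2 * m + 1) ^ 2 * ‖z / (2 * m + 1)‖ ^ n := by
        rw [norm_div, norm_div, norm_pow, norm_pow, norm_two_mul_add_one, div_pow, pow_add]
        field_simp
    _ ≤ 1 / (2 * m + 1) ^ 2 * ‖z‖ ^ n := by
        gcongr
        exact norm_div_two_mul_add_one_le z m

theorem summable_div_odd_pow_div {z : ℂ} (hz : ‖z‖ < 1) :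
    Summable fun p : ℕ × ℕ ↦ (z / (2 * p.1 + 1)) ^ (p.2 + 2) / (p.2 + 2) := by
  refine .of_norm_bounded (summable_norm_pow_div_odd_pow hz) fun ⟨m, n⟩ ↦ ?_
  have hn : ‖(n + 2 : ℂ)‖ = n + 2 := mod_cast Complex.norm_natCast (n + 2)
  rw [norm_div, hn, div_pow, norm_div, norm_div]
  refine (div_le_self (by positivity) (by linarith [n.cast_nonneg (α := ℝ)])).trans ?_
  simp only [norm_pow]
  gcongr ?_ / _
  exact pow_le_pow_of_le_one (norm_nonneg z) hz.le (by lia)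

theorem hasSum_div_odd_pow_div_neg_log {z : ℂ} (hz : ‖z‖ < 1) (m : ℕ) :
    HasSum (fun n : ℕ ↦ (z / (2 * m + 1)) ^ (n + 2) / (n + 2))
      (-Complex.log (1 - z / (2 * m + 1)) - z / (2 * m + 1)) := by
  have hlog := Complex.hasSum_taylorSeries_neg_log ((norm_div_two_mul_add_one_le z m).trans_lt hz)
  simpa [Finset.sum_range_succ] using (hasSum_nat_add_iff' 2).2 hlog

theorem hasSum_div_odd_pow_div_tval (z : ℂ) (n : ℕ) :
    HasSum (fun m : ℕ ↦ (z / (2 * m + 1)) ^ (n + 2) / (n + 2))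
      (tval (n + 2) / (n + 2) * z ^ (n + 2)) := by
  have htval : HasSum (fun m : ℕ ↦ 1 / (2 * (m : ℂ) + 1) ^ (n + 2)) (tval (n + 2)) := by
    have hreal := Complex.hasSum_ofReal.2 (summable_one_div_odd_pow (by lia : 1 < n + 2)).hasSum
    simpa [tval] using hreal
  rw [div_mul_eq_mul_div, mul_div_assoc]
  refine (htval.mul_right (z ^ (n + 2) / (n + 2))).congr_fun fun m ↦ ?_
  rw [div_pow]
  ring

/-- The generating function `∑_{n ≥ 2} (t(n)/n) zⁿ` of the single `t`-values. -/
noncomputable def tvalSeries (z : ℂ) : ℂ :=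
  ∑' n : ℕ, (tval (n + 2) : ℂ) / (n + 2) * z ^ (n + 2)

theorem hasSum_tvalSeries {z : ℂ} (hz : ‖z‖ < 1) :
    HasSum (fun p : ℕ × ℕ ↦ (z / (2 * p.1 + 1)) ^ (p.2 + 2) / (p.2 + 2)) (tvalSeries z) ∧
      HasSum (fun n : ℕ ↦ (tval (n + 2) : ℂ) / (n + 2) * z ^ (n + 2)) (tvalSeries z) := by
  have hdouble := (summable_div_odd_pow_div hz).hasSum
  have hcolumns := ((Equiv.prodComm ℕ ℕ).hasSum_iff.2 hdouble).prod_fiberwise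
    (hasSum_div_odd_pow_div_tval z)
  rw [tvalSeries, hcolumns.tsum_eq]
  exact ⟨hdouble, hcolumns⟩

theorem hasSum_neg_log_one_sub_div_odd {z : ℂ} (hz : ‖z‖ < 1) :
    HasSum (fun m : ℕ ↦ -Complex.log (1 - z / (2 * m + 1)) - z / (2 * m + 1)) (tvalSeries z) :=
  (hasSum_tvalSeries hz).1.prod_fiberwise (hasSum_div_odd_pow_div_neg_log hz)

theorem hasSum_tval_mul_sub_sub {u x y : ℂ} (hu : ‖u‖ < 1) (hx : ‖x‖ < 1) (hy : ‖y‖ < 1) :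
    HasSum (fun n : ℕ ↦ (tval (n + 2) : ℂ) / (n + 2) *
      (u ^ (n + 2) - x ^ (n + 2) - y ^ (n + 2)))
      (tvalSeries u - tvalSeries x - tvalSeries y) := by
  simp only [mul_sub]
  exact ((hasSum_tvalSeries hu).2.sub (hasSum_tvalSeries hx).2).sub
    (hasSum_tvalSeries hy).2

theorem one_add_div_eq_div_of_roots {F : Type*} [Field F] {M u w x y : F} (hM : M ≠ 0)
    (hu : 1 - u / M ≠ 0) (hadd : x + y = u) (hmul : x * y = w) :
    1 + w / (M * (M - u)) = (1 - x / M) * (1 - y / M) / (1 - u / M) := by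
  have hMu : M - u ≠ 0 := by
    rintro h
    simp [← sub_eq_zero.1 h, hM] at hu
  rw [eq_div_iff hu, one_sub_div hM, ← hmul]
  field_simp
  rw [← hadd]
  ring

theorem hasProd_exp_tvalSeries {u w x y : ℂ} (hu : ‖u‖ < 1) (hx : ‖x‖ < 1) (hy : ‖y‖ < 1)
    (hadd : x + y = u) (hmul : x * y = w) :
    HasProd (fun m : ℕ ↦ 1 + w / ((2 * m + 1) * (2 * m + 1 - u)))
      (Complex.exp (tvalSeries u - tvalSeries x - tvalSeries y)) := by
  refine (((hasSum_neg_log_one_sub_div_odd hu).sub (hasSum_neg_log_one_sub_div_odd hx)).sub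
    (hasSum_neg_log_one_sub_div_odd hy)).cexp.congr_fun fun m ↦ ?_
  have hlinear (M : ℂ) : x / M + y / M = u / M := by rw [← add_div, hadd]
  have hnonzero {z : ℂ} (hz : ‖z‖ < 1) := one_sub_div_two_mul_add_one_ne_zero hz m
  calc 1 + w / ((2 * m + 1) * (2 * m + 1 - u))
      = (1 - x / (2 * m + 1)) * (1 - y / (2 * m + 1)) / (1 - u / (2 * m + 1)) :=
        one_add_div_eq_div_of_roots (two_mul_add_one_ne_zero m) (hnonzero hu) hadd hmul
    _ = Complex.exp (Complex.log (1 - x / (2 * m + 1)) + Complex.log (1 - y / (2 * m + 1)) -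
          Complex.log (1 - u / (2 * m + 1))) := by
        rw [Complex.exp_sub, Complex.exp_add, Complex.exp_log (hnonzero hx),
          Complex.exp_log (hnonzero hy), Complex.exp_log (hnonzero hu)]
    _ = _ := by
        simp only [Function.comp_apply]
        congr 1
        linear_combination -hlinear (2 * m + 1)

end OddLog

section ListGeneratingFunction

open OrderDual

theorem tsum_mul_geometric_div_pow {𝕜 : Type*} [NormedField 𝕜] {M u : 𝕜} (hM : M ≠ 0)
    (hu : ‖u / M‖ < 1) (w : 𝕜) :
    ∑' e : ℕ, w * (u ^ e / M ^ (e + 2)) = w / (M * (M - u)) := by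
  have hterm (e : ℕ) : w * (u ^ e / M ^ (e + 2)) = w / M ^ 2 * (u / M) ^ e := by
    rw [div_pow, pow_add]
    field_simp
  simp_rw [hterm, tsum_mul_left, tsum_geometric_of_norm_lt_one hu, one_sub_div hM, inv_div]
  field_simp

theorem prod_mul_pow_div_pow {ι F : Type*} [Field F] (s : Finset ι) (u w : F) (M : ι → F)
    (e : ι → ℕ) : ∏ j ∈ s, w * (u ^ e j / M j ^ (e j + 2)) =
      (∏ j ∈ s, (M j ^ (e j + 2))⁻¹) * u ^ (∑ j ∈ s, e j) * w ^ s.card := by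
  simp only [Finset.prod_mul_distrib, div_eq_mul_inv, Finset.prod_pow_eq_pow_sum,
    Finset.prod_const]
  ring

theorem hasSum_list_multT {u : ℂ} (hu : ‖u‖ < 1) (w : ℂ) :
    HasSum (fun L : List ℕ ↦ multT (L.map (· + 2)) * u ^ L.sum * w ^ L.length)
      (∏' m : ℕ, (1 + w / ((2 * m + 1) * (2 * m + 1 - u)))) := by
  let c (m : ℕᵒᵈ) (e : ℕ) : ℂ := w * (u ^ e / (2 * (ofDual m : ℕ) + 1) ^ (e + 2))
  have hc : Summable fun p : ℕᵒᵈ × ℕ ↦ ‖c p.1 p.2‖ := by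
    simp only [c, norm_mul w]
    exact (summable_norm_pow_div_odd_pow hu).mul_left ‖w‖
  have hproduct : ∏' m : ℕᵒᵈ, (1 + ∑' e, c m e) =
      ∏' m : ℕ, (1 + w / ((2 * m + 1) * (2 * m + 1 - u))) := by
    rw [← toDual.tprod_eq]
    refine tprod_congr fun m ↦ congrArg (1 + ·) ?_
    exact tsum_mul_geometric_div_pow (two_mul_add_one_ne_zero m)
      ((norm_div_two_mul_add_one_le u m).trans_lt hu) w
  have hlists := hasSum_list_tsum_prod hc
  rw [hproduct] at hlists
  refine hlists.congr_fun fun L ↦ ?_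
  rw [multT_map]
  simp only [c, prod_mul_pow_div_pow, Complex.ofReal_tsum, ← tsum_mul_right]
  exact tsum_congr fun m ↦ by simp [Fin.sum_univ_getElem]

end ListGeneratingFunction

theorem norm_lt_one_of_sq_eq {𝕜 : Type*} [NormedField 𝕜] {u w x : 𝕜} (h : ‖u‖ + ‖w‖ < 1)
    (hx : x ^ 2 = u * x - w) : ‖x‖ < 1 := by
  have hsq : ‖x‖ ^ 2 ≤ ‖u‖ * ‖x‖ + ‖w‖ := by
    rw [← norm_pow, hx, ← norm_mul]
    exact norm_sub_le _ _
  by_contra! hx1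
  nlinarith [norm_nonneg w, norm_nonneg u]

theorem maximal_height_multiple_t_general {u w x y : ℂ} (hu : ‖u‖ < 1) (hx : ‖x‖ < 1)
    (hy : ‖y‖ < 1) (hadd : x + y = u) (hmul : x * y = w) :
    (Summable fun p : ℕ × ℕ ↦
      (G0h (p.1 + 2 * p.2 + 2) (p.2 + 1) (p.2 + 1) : ℂ) * u ^ p.1 * w ^ (p.2 + 1)) ∧
    (Summable fun n : ℕ ↦ (tval (n + 2) : ℂ) / (n + 2) *
      (u ^ (n + 2) - x ^ (n + 2) - y ^ (n + 2))) ∧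
    1 + ∑' p : ℕ × ℕ,
        (G0h (p.1 + 2 * p.2 + 2) (p.2 + 1) (p.2 + 1) : ℂ) * u ^ p.1 * w ^ (p.2 + 1) =
      Complex.exp (∑' n : ℕ, (tval (n + 2) : ℂ) / (n + 2) *
        (u ^ (n + 2) - x ^ (n + 2) - y ^ (n + 2))) := by
  have hG0h := hasSum_G0h_maximalHeight (hasSum_list_multT hu w)
  refine ⟨hG0h.summable, (hasSum_tval_mul_sub_sub hu hx hy).summable, ?_⟩
  rw [hG0h.tsum_eq, add_sub_cancel, (hasSum_tval_mul_sub_sub hu hx hy).tsum_eq]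
  exact (hasProd_exp_tvalSeries hu hx hy hadd hmul).tprod_eq

/-- Generating function of sums of multiple `t`-values of maximal height (Corollary 2.3):
`1 + ∑ G₀(k,n,n) u^(k-2n) w^n = exp(∑_{n≥2} (t(n)/n)(uⁿ - xⁿ - yⁿ))` where
`x + y = u` and `xy = w`. -/
theorem maximal_height_multiple_t :
    ∃ δ > (0 : ℝ), ∀ u w : ℝ, |u| < δ → |w| < δ →
      ∀ x y : ℂ, x + y = (u : ℂ) → x * y = (w : ℂ) →
        Summable (fun p : ℕ × ℕ =>
        G0h (p.1 + 2 * p.2 + 2) (p.2 + 1) (p.2 + 1) * u ^ p.1 * w ^ (p.2 + 1)) ∧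
        Summable (fun n : ℕ => ((tval (n + 2) : ℂ) / (n + 2)) *
          ((u : ℂ) ^ (n + 2) - x ^ (n + 2) - y ^ (n + 2))) ∧
        ((1 + (∑' p : ℕ × ℕ,
            G0h (p.1 + 2 * p.2 + 2) (p.2 + 1) (p.2 + 1) * u ^ p.1 * w ^ (p.2 + 1)) : ℝ) : ℂ)
          = Complex.exp (∑' n : ℕ, ((tval (n + 2) : ℂ) / (n + 2)) *
              ((u : ℂ) ^ (n + 2) - x ^ (n + 2) - y ^ (n + 2))) := by
  refine ⟨1 / 2, by norm_num, fun u w hu hw x y hxy hxy' ↦ ?_⟩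
  have hu1 : ‖(u : ℂ)‖ < 1 := by
    rw [Complex.norm_real, Real.norm_eq_abs]
    linarith
  have huw : ‖(u : ℂ)‖ + ‖(w : ℂ)‖ < 1 := by
    simp only [Complex.norm_real, Real.norm_eq_abs]
    linarith
  have hx : ‖x‖ < 1 := norm_lt_one_of_sq_eq huw (by linear_combination x * hxy - hxy')
  have hy : ‖y‖ < 1 := norm_lt_one_of_sq_eq huw (by linear_combination y * hxy - hxy')
  obtain ⟨hG0h, htval, hexp⟩ := maximal_height_multiple_t_general hu1 hx hy hxy hxy'
  exact ⟨by exact_mod_cast hG0h, htval, by exact_mod_cast hexp⟩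
end
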